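/- arXiv:1003.4620 — 6 statements merged into one kernel-verified Lean document; each statement's English description precedes it below -/
import Mathlib

section
/- Let H be a complex Hilbert space with Hilbert basis Φ = (Φ_n)_{n∈ℕ}, let X, Y : H → H be continuous linear bijections with continuous inverses, set φ_n = X(Φ_n), Ψ_n = Y(Φ_n), and assume ⟨φ_n, Ψ_m⟩ = δ_{nm} for all n,m. Then for every f ∈ H the series Σ_{n≥0} ⟨Ψ_n, f⟩·φ_n converges in H and equals f, and likewise Σ_{n≥0} ⟨φ_n, f⟩·Ψ_n = f. -/
open MeasureTheory InnerProductSpace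
open scoped InnerProductSpace ComplexConjugate

/-- If `Ψ` is biorthogonal to the image of a Hilbert basis under a continuous linear equivalence,
then its inner products with a vector are the coefficients of that vector along the image. -/
theorem HilbertBasis.hasSum_inner_smul_of_biorthogonal {ι H : Type*} [DecidableEq ι]
    [NormedAddCommGroup H] [InnerProductSpace ℂ H] (Φ : HilbertBasis ι ℂ H) (X : H ≃L[ℂ] H)
    (Ψ : ι → H) (hbi : ∀ m n, ⟪Ψ m, X (Φ n)⟫_ℂ = if m = n then 1 else 0) (f : H) :
    HasSum (fun n => ⟪Ψ n, f⟫_ℂ • X (Φ n)) f := by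
  have hsum : HasSum (fun n => Φ.repr (X.symm f) n • X (Φ n)) f := by
    simpa using (Φ.hasSum_repr (X.symm f)).mapL (X : H →L[ℂ] H)
  have hcoeff (m : ι) : ⟪Ψ m, f⟫_ℂ = Φ.repr (X.symm f) m := by
    have h := hsum.mapL (innerSL ℂ (Ψ m))
    simp only [innerSL_apply_apply, inner_smul_right, hbi, mul_ite, mul_one, mul_zero] at h
    refine h.unique ?_
    simpa using hasSum_single m (f := fun n => if m = n then Φ.repr (X.symm f) n else 0)
      fun n hn => if_neg hn.symm
  simpa only [hcoeff] using hsum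

theorem stmt_3 {H : Type*} [NormedAddCommGroup H] [InnerProductSpace ℂ H] [CompleteSpace H]
    (Φ : HilbertBasis ℕ ℂ H) (X Y : H ≃L[ℂ] H)
    (φ Ψ : ℕ → H) (hφ : ∀ n, φ n = X (Φ n)) (hΨ : ∀ n, Ψ n = Y (Φ n))
    (hbi : ∀ n m, ⟪φ n, Ψ m⟫_ℂ = if n = m then 1 else 0) (f : H) :
    HasSum (fun n : ℕ => ⟪Ψ n, f⟫_ℂ • φ n) f ∧
    HasSum (fun n : ℕ => ⟪φ n, f⟫_ℂ • Ψ n) f := by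
  constructor
  · simp only [hφ]
    refine Φ.hasSum_inner_smul_of_biorthogonal X Ψ (fun m n => ?_) f
    rw [← hφ, ← inner_conj_symm, hbi]
    simp [eq_comm, apply_ite]
  · simp only [hΨ]
    refine Φ.hasSum_inner_smul_of_biorthogonal Y φ (fun m n => ?_) f
    rw [← hΨ, hbi]
end

section
/- Let α ∈ ℂ, let w_a : ℝ → ℂ be differentiable with derivative W_a = w_a', set W_b(x) = 2x + α − W_a(x), and let b act on differentiable f : ℝ → ℂ by (b f)(x) = (1/√2)(−f'(x) + W_b(x)·f(x)). Then for every n ∈ ℕ and every x ∈ ℝ, the n-fold application of b to the function x ↦ exp(−w_a(x)) satisfies (bⁿ (exp(−w_a)))(x) = 2^{−n/2}·p_n(x)·exp(−w_a(x)), where (p_n) is the polynomial sequence associated with α. -/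
/-- The polynomial sequence associated with `α`: `p₀ = 1`,
`p_{n+1}(x) = (2x + α) pₙ(x) - pₙ'(x)`. -/
noncomputable def pSeq (α : ℂ) : ℕ → Polynomial ℂ
  | 0 => 1
  | n + 1 => (2 * Polynomial.X + Polynomial.C α) * pSeq α n -
      Polynomial.derivative (pSeq α n)

/-- The creation-type operator `b = (1/√2)(-d/dx + W_b(x))`. -/
noncomputable def opB (Wb : ℝ → ℂ) (f : ℝ → ℂ) : ℝ → ℂ :=
  fun x => (1 / ((Real.sqrt 2 : ℝ) : ℂ)) * (-deriv f x + Wb x * f x)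

theorem stmt_5 (α : ℂ) (wa : ℝ → ℂ) (hwa : Differentiable ℝ wa)
    (Wb : ℝ → ℂ) (hWb : ∀ x : ℝ, Wb x = 2 * (x : ℂ) + α - deriv wa x) :
    ∀ (n : ℕ) (x : ℝ),
      (opB Wb)^[n] (fun t : ℝ => Complex.exp (-wa t)) x =
        (1 / ((Real.sqrt 2 : ℝ) : ℂ)) ^ n * (pSeq α n).eval (x : ℂ) *
          Complex.exp (-wa x) := by
  intro n
  induction n with
  | zero => intro x; simp [pSeq]
  | succ n ih =>
    intro x
    rw [Function.iterate_succ_apply', funext ih]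
    have hexp : HasDerivAt (fun t : ℝ => Complex.exp (-wa t))
        (Complex.exp (-wa x) * -deriv wa x) x :=
      (hwa x).hasDerivAt.neg.cexp
    have hpoly : HasDerivAt (fun t : ℝ => (pSeq α n).eval (t : ℂ))
        ((pSeq α n).derivative.eval (x : ℂ)) x :=
      ((pSeq α n).hasDerivAt (x : ℂ)).comp_ofReal
    have hderiv := ((hpoly.const_mul ((1 / ((Real.sqrt 2 : ℝ) : ℂ)) ^ n)).mul hexp).deriv
    simp only [Pi.mul_def] at hderiv
    simp only [opB, hderiv, hWb, pSeq, Polynomial.eval_sub, Polynomial.eval_mul,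
      Polynomial.eval_add, Polynomial.eval_X, Polynomial.eval_C, Polynomial.eval_ofNat]
    ring
end

section
/- Let α ∈ ℂ and let (p_n) be the polynomial sequence associated with α. Then for all n, m ∈ ℕ the function x ↦ p_n(x)·p_m(x)·exp(−(x² + αx)) is integrable on ℝ and ∫_ℝ p_n(x)·p_m(x)·exp(−(x² + αx)) dx = δ_{nm} · n! · 2ⁿ · √π · exp(α²/4); in particular the integral vanishes whenever n ≠ m. -/
open MeasureTheory

open Polynomial

theorem derivative_pSeq_succ (α : ℂ) (n : ℕ) :
    derivative (pSeq α (n + 1)) = C (2 * (n + 1 : ℂ)) * pSeq α n := by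
  induction n with
  | zero => simpa [pSeq] using (C_ofNat 2).symm
  | succ k ih =>
    have h : pSeq α (k + 2) =
        (2 * X + C α) * pSeq α (k + 1) - derivative (pSeq α (k + 1)) := rfl
    have h' : pSeq α (k + 1) = (2 * X + C α) * pSeq α k - derivative (pSeq α k) := rfl
    have hX : derivative (2 * X + C α : ℂ[X]) = 2 := by simp
    have hd : derivative (derivative (pSeq α (k + 1))) =
        C (2 * (k + 1 : ℂ)) * derivative (pSeq α k) := by
      rw [ih, derivative_C_mul]
    have hC : (C (2 * ((k + 1 : ℕ) + 1 : ℂ)) : ℂ[X]) = 2 + C (2 * (k + 1 : ℂ)) := by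
      rw [show (2 * ((k + 1 : ℕ) + 1 : ℂ)) = 2 + 2 * (k + 1 : ℂ) by push_cast; ring, C_add]
      rfl
    rw [h, derivative_sub, derivative_mul, hd, ih, hX, hC]
    linear_combination -C (2 * (k + 1 : ℂ)) * h'

theorem integrable_pow_mul_cexp_neg_sq_add (α : ℂ) (k : ℕ) :
    Integrable (fun x : ℝ => (x : ℂ) ^ k * Complex.exp (-((x : ℂ) ^ 2 + α * x))) := by
  have hint (c : ℂ) : Integrable fun x : ℝ => Complex.exp (-1 * (x : ℂ) ^ 2 + c * x + 0) :=
    integrable_cexp_quadratic (by simp) c 0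
  refine (((hint (1 - α)).norm.add (hint (-1 - α)).norm).const_mul (k.factorial : ℝ)).mono'
    (by fun_prop) (.of_forall fun x => ?_)
  have hsplit (s : ℝ) : ‖Complex.exp (-1 * (x : ℂ) ^ 2 + (s - α) * x + 0)‖ =
      Real.exp (s * x) * ‖Complex.exp (-((x : ℂ) ^ 2 + α * x))‖ := by
    rw [show -1 * (x : ℂ) ^ 2 + (s - α) * x + 0 =
      ((s * x : ℝ) : ℂ) + -((x : ℂ) ^ 2 + α * x) by push_cast; ring,
      Complex.exp_add, norm_mul, Complex.norm_exp_ofReal]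
  have hpos := hsplit 1
  have hneg := hsplit (-1)
  push_cast at hpos hneg
  simp only [Pi.add_apply]
  rw [hpos, hneg, norm_mul, norm_pow, Complex.norm_real, Real.norm_eq_abs, ← add_mul, ← mul_assoc]
  gcongr
  have hexp := Real.pow_div_factorial_le_exp |x| (abs_nonneg x) k
  rw [div_le_iff₀' (by positivity)] at hexp
  refine hexp.trans ?_
  gcongr
  simpa using Real.exp_abs_le x

theorem integrable_eval_mul_cexp_neg_sq_add (α : ℂ) (q : ℂ[X]) :
    Integrable (fun x : ℝ => q.eval (x : ℂ) * Complex.exp (-((x : ℂ) ^ 2 + α * x))) := by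
  induction q using Polynomial.induction_on' with
  | add p q hp hq => simpa only [eval_add, add_mul] using! hp.add hq
  | monomial k a =>
    simpa only [eval_monomial, mul_assoc] using
      (integrable_pow_mul_cexp_neg_sq_add α k).const_mul a

theorem integral_derivative_sub_mul_cexp_neg_sq_add (α : ℂ) (q : ℂ[X]) :
    ∫ x : ℝ, (derivative q - (2 * X + C α) * q).eval (x : ℂ) *
      Complex.exp (-((x : ℂ) ^ 2 + α * x)) = 0 := by
  refine integral_eq_zero_of_hasDerivAt_of_integrable (fun x => ?_)
    (integrable_eval_mul_cexp_neg_sq_add α _) (integrable_eval_mul_cexp_neg_sq_add α q)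
  have hw : HasDerivAt (fun z : ℂ => -(z ^ 2 + α * z)) (-(2 * (x : ℂ) + α)) x := by
    simpa using! (((hasDerivAt_id (x : ℂ)).pow 2).add ((hasDerivAt_id (x : ℂ)).const_mul α)).neg
  convert! ((q.hasDerivAt (x : ℂ)).mul hw.cexp).comp_ofReal using 1
  simp
  ring

theorem integral_pSeq_succ_mul (α : ℂ) (n : ℕ) (q : ℂ[X]) :
    ∫ x : ℝ, (pSeq α (n + 1) * q).eval (x : ℂ) * Complex.exp (-((x : ℂ) ^ 2 + α * x)) =
      ∫ x : ℝ, (pSeq α n * derivative q).eval (x : ℂ) *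
        Complex.exp (-((x : ℂ) ^ 2 + α * x)) := by
  have h := integral_derivative_sub_mul_cexp_neg_sq_add α (pSeq α n * q)
  have hq : derivative (pSeq α n * q) - (2 * X + C α) * (pSeq α n * q) =
      pSeq α n * derivative q - pSeq α (n + 1) * q := by
    rw [derivative_mul, pSeq]
    ring
  simp only [hq, eval_sub, sub_mul] at h
  rw [integral_sub (integrable_eval_mul_cexp_neg_sq_add α _)
    (integrable_eval_mul_cexp_neg_sq_add α _), sub_eq_zero] at h
  exact h.symm

theorem integral_cexp_neg_sq_add (α : ℂ) :
    ∫ x : ℝ, Complex.exp (-((x : ℂ) ^ 2 + α * x)) =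
      ((Real.sqrt Real.pi : ℝ) : ℂ) * Complex.exp (α ^ 2 / 4) := by
  have h := integral_cexp_quadratic (b := -1) (by simp) (-α) 0
  have hsqrt : ((Real.sqrt Real.pi : ℝ) : ℂ) = (Real.pi : ℂ) ^ (1 / 2 : ℂ) := by
    rw [Real.sqrt_eq_rpow, Complex.ofReal_cpow Real.pi_pos.le]
    norm_num
  rw [hsqrt]
  convert! h using 2
  · ext x
    congr 1
    ring
  · norm_num
  · congr 1
    ring

theorem integral_pSeq_mul_pSeq (α : ℂ) (n m : ℕ) :
    ∫ x : ℝ, (pSeq α n * pSeq α m).eval (x : ℂ) * Complex.exp (-((x : ℂ) ^ 2 + α * x)) =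
      (if n = m then 1 else 0) * (n.factorial : ℂ) * 2 ^ n *
        ((Real.sqrt Real.pi : ℝ) : ℂ) * Complex.exp (α ^ 2 / 4) := by
  induction n generalizing m with
  | zero =>
    cases m with
    | zero => simpa [pSeq] using integral_cexp_neg_sq_add α
    | succ m =>
      rw [mul_comm, integral_pSeq_succ_mul]
      simp [pSeq]
  | succ n ih =>
    rw [integral_pSeq_succ_mul]
    cases m with
    | zero => simp [pSeq]
    | succ m =>
      simp only [derivative_pSeq_succ, mul_left_comm (pSeq α n) (C _), eval_C_mul,
        mul_assoc (2 * ((m : ℂ) + 1))]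
      rw [integral_const_mul, ih]
      rcases eq_or_ne n m with rfl | h
      · simp only [if_true, Nat.factorial_succ]
        push_cast
        ring
      · simp [h]

theorem stmt_8 (α : ℂ) (n m : ℕ) :
    Integrable (fun x : ℝ =>
      (pSeq α n).eval (x : ℂ) * (pSeq α m).eval (x : ℂ) *
        Complex.exp (-((x : ℂ) ^ 2 + α * x))) (volume : Measure ℝ) ∧
    ∫ x : ℝ, (pSeq α n).eval (x : ℂ) * (pSeq α m).eval (x : ℂ) *
        Complex.exp (-((x : ℂ) ^ 2 + α * x)) =
      (if n = m then 1 else 0) * (n.factorial : ℂ) * 2 ^ n *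
        ((Real.sqrt Real.pi : ℝ) : ℂ) * Complex.exp (α ^ 2 / 4) := by
  simp only [← eval_mul]
  exact ⟨integrable_eval_mul_cexp_neg_sq_add α _, integral_pSeq_mul_pSeq α n m⟩
end

section
/- For all f, g ∈ L²(ℝ, ℂ), the function z ↦ ⟨f, η(·;z)⟩·⟨η(·;z), g⟩ is integrable over ℂ and (1/π)·∫_ℂ ⟨f, η(·;z)⟩·⟨η(·;z), g⟩ dz = ⟨f, g⟩; that is, the standard coherent states resolve the identity weakly. -/
open MeasureTheory
open scoped ComplexConjugate

/-- The coherent-state wavefunction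
`η(x;z) = π^{-1/4} exp(-x²/2 + √2 z x - (Re z)²)`. -/
noncomputable def eta (z : ℂ) : ℝ → ℂ := fun x =>
  ((Real.pi ^ (-(1 / 4 : ℝ)) : ℝ) : ℂ) *
    Complex.exp (-(x : ℂ) ^ 2 / 2 + ((Real.sqrt 2 : ℝ) : ℂ) * z * x - (z.re : ℂ) ^ 2)

open FourierTransform

section Plancherel

variable {V : Type*} [NormedAddCommGroup V] [InnerProductSpace ℝ V] [FiniteDimensional ℝ V]
  [MeasurableSpace V] [BorelSpace V]

/-- On `L¹ ∩ L²` the Fourier integral agrees almost everywhere with the `L²` Fourier transform. -/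
theorem fourier_ae_eq_fourier_toLp {h : V → ℂ} (h₁ : Integrable h) (h₂ : MemLp h 2) :
    𝓕 h =ᵐ[volume] (𝓕 (h₂.toLp h) : Lp ℂ 2 (volume : Measure V)) := by
  have hcont : Continuous (𝓕 h) :=
    VectorFourier.fourierIntegral_continuous Real.continuous_fourierChar
      (L := innerₗ V) continuous_inner h₁
  refine ae_eq_of_integral_contDiff_smul_eq hcont.locallyIntegrable
    ((Lp.memLp _).locallyIntegrable one_le_two) fun φ hφ hφc => ?_
  have hφc' : HasCompactSupport (Complex.ofRealCLM ∘ φ) := hφc.comp_left rfl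
  have hφ' : ContDiff ℝ (⊤ : ℕ∞) (Complex.ofRealCLM ∘ φ) := by fun_prop
  set ψ := hφc'.toSchwartzMap hφ' with hψ
  have hψφ : ∀ x, ψ x = (φ x : ℂ) := fun x => by simp [hψ]
  calc ∫ x, φ x • 𝓕 h x = ∫ x, 𝓕 h x • ψ x := by
        simp [hψφ, mul_comm]
    _ = ∫ x, h x • 𝓕 ψ x := by
        have := VectorFourier.integral_fourierIntegral_smul_eq_flip (L := innerₗ V)
          Real.continuous_fourierChar continuous_inner h₁ (ψ.integrable (μ := volume))
        simpa using! this
    _ = ∫ x, 𝓕 ψ x • h₂.toLp h x := by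
        refine integral_congr_ae ?_
        filter_upwards [h₂.coeFn_toLp] with x hx
        simp [hx, mul_comm]
    _ = ∫ x, ψ x • (𝓕 (h₂.toLp h) : Lp ℂ 2 (volume : Measure V)) x := by
        rw [← Lp.toTemperedDistribution_apply, ← Lp.toTemperedDistribution_apply,
          ← Lp.fourier_toTemperedDistribution_eq, TemperedDistribution.fourier_apply]
    _ = ∫ x, φ x • (𝓕 (h₂.toLp h) : Lp ℂ 2 (volume : Measure V)) x := by
        simp [hψφ]

theorem memLp_two_fourier {h : V → ℂ} (h₁ : Integrable h) (h₂ : MemLp h 2) :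
    MemLp (𝓕 h) 2 :=
  (memLp_congr_ae (fourier_ae_eq_fourier_toLp h₁ h₂)).2 (Lp.memLp _)

/-- **Plancherel's theorem** for functions in `L¹ ∩ L²`. -/
theorem integral_conj_fourier_mul_fourier {h k : V → ℂ} (h₁ : Integrable h) (h₂ : MemLp h 2)
    (k₁ : Integrable k) (k₂ : MemLp k 2) :
    ∫ ξ, conj (𝓕 h ξ) * 𝓕 k ξ = ∫ x, conj (h x) * k x := by
  have key := Lp.inner_fourier_eq (h₂.toLp h) (k₂.toLp k)
  rw [L2.inner_def, L2.inner_def] at key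
  calc ∫ ξ, conj (𝓕 h ξ) * 𝓕 k ξ
      = ∫ ξ, inner ℂ ((𝓕 (h₂.toLp h) : Lp ℂ 2 (volume : Measure V)) ξ)
          ((𝓕 (k₂.toLp k) : Lp ℂ 2 (volume : Measure V)) ξ) := by
        refine integral_congr_ae ?_
        filter_upwards [fourier_ae_eq_fourier_toLp h₁ h₂, fourier_ae_eq_fourier_toLp k₁ k₂]
          with ξ hξ kξ
        rw [hξ, kξ, RCLike.inner_apply']
    _ = ∫ x, inner ℂ (h₂.toLp h x) (k₂.toLp k x) := key
    _ = ∫ x, conj (h x) * k x := by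
        refine integral_congr_ae ?_
        filter_upwards [h₂.coeFn_toLp, k₂.coeFn_toLp] with x hx kx
        rw [hx, kx, RCLike.inner_apply']

end Plancherel

/-- The modulus of the coherent state `eta z` with `z.re = p`: a normalized Gaussian centred at
`√2 p`. -/
noncomputable def gaussianWindow (p x : ℝ) : ℝ :=
  Real.pi ^ (-(1 / 4 : ℝ)) * Real.exp (-(1 / 2) * (x - √2 * p) ^ 2)

theorem continuous_gaussianWindow : Continuous fun q : ℝ × ℝ => gaussianWindow q.1 q.2 := by
  unfold gaussianWindow
  fun_prop

theorem gaussianWindow_nonneg (p x : ℝ) : 0 ≤ gaussianWindow p x := by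
  unfold gaussianWindow
  positivity

theorem gaussianWindow_sq (p x : ℝ) :
    gaussianWindow p x ^ 2 = (√Real.pi)⁻¹ * Real.exp (-1 * (x - √2 * p) ^ 2) := by
  rw [gaussianWindow, mul_pow, ← Real.rpow_natCast, ← Real.rpow_mul Real.pi_pos.le,
    ← Real.exp_nat_mul, Real.sqrt_eq_rpow Real.pi, ← Real.rpow_neg Real.pi_pos.le]
  congr 2
  · norm_num
  · push_cast
    ring

theorem integrable_gaussianWindow_sq (p : ℝ) : Integrable fun x => gaussianWindow p x ^ 2 := by
  simp_rw [gaussianWindow_sq]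
  exact ((integrable_exp_neg_mul_sq one_pos).comp_sub_right (√2 * p)).const_mul _

theorem memLp_gaussianWindow_two (p : ℝ) : MemLp (fun x => (gaussianWindow p x : ℂ)) 2 := by
  have hc : Continuous fun x => gaussianWindow p x :=
    continuous_gaussianWindow.comp (by fun_prop : Continuous fun x : ℝ => (p, x))
  refine MemLp.ofReal ((memLp_two_iff_integrable_sq hc.aestronglyMeasurable).2 ?_)
  exact integrable_gaussianWindow_sq p

theorem memLp_gaussianWindow_top (p : ℝ) :
    MemLp (fun x => (gaussianWindow p x : ℂ)) (⊤ : ENNReal) := by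
  have hc : Continuous fun x => gaussianWindow p x :=
    continuous_gaussianWindow.comp (by fun_prop : Continuous fun x : ℝ => (p, x))
  refine memLp_top_of_bound (Complex.continuous_ofReal.comp hc).aestronglyMeasurable
    (Real.pi ^ (-(1 / 4 : ℝ))) (.of_forall fun x => ?_)
  rw [Complex.norm_real, Real.norm_of_nonneg (gaussianWindow_nonneg p x), gaussianWindow]
  refine mul_le_of_le_one_right (by positivity) (Real.exp_le_one_iff.2 ?_)
  nlinarith [sq_nonneg (x - √2 * p)]

theorem gaussianWindow_sq_eq_centre_variable (p x : ℝ) :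
    gaussianWindow p x ^ 2 = (√Real.pi)⁻¹ * Real.exp (-2 * (p - x / √2) ^ 2) := by
  rw [gaussianWindow_sq]
  congr 2
  have h2 : √2 ^ 2 = 2 := Real.sq_sqrt zero_le_two
  have hx : x = √2 * (x / √2) := by field_simp
  generalize x / √2 = y at hx
  rw [hx]
  linear_combination (-(y - p) ^ 2) * h2

theorem integrable_gaussianWindow_sq_centre (x : ℝ) :
    Integrable fun p => gaussianWindow p x ^ 2 := by
  simp_rw [gaussianWindow_sq_eq_centre_variable]
  exact ((integrable_exp_neg_mul_sq two_pos).comp_sub_right (x / √2)).const_mul _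

theorem integral_gaussianWindow_sq_centre (x : ℝ) :
    ∫ p, gaussianWindow p x ^ 2 = (√2)⁻¹ := by
  simp_rw [gaussianWindow_sq_eq_centre_variable]
  rw [integral_const_mul, integral_sub_right_eq_self (fun p => Real.exp (-2 * p ^ 2)),
    integral_gaussian, Real.sqrt_div Real.pi_pos.le]
  have := Real.sqrt_pos.2 Real.pi_pos
  field_simp

/-- Smearing an integrable function by the squared Gaussian windows is integrable on the plane. -/
theorem integrable_gaussianWindow_sq_mul {u : ℝ → ℂ} (hu : Integrable u) :
    Integrable fun q : ℝ × ℝ => ((gaussianWindow q.1 q.2 ^ 2 : ℝ) : ℂ) * u q.2 := by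
  have hm : AEStronglyMeasurable
      (fun q : ℝ × ℝ => ((gaussianWindow q.1 q.2 ^ 2 : ℝ) : ℂ) * u q.2)
      ((volume : Measure ℝ).prod volume) :=
    AEStronglyMeasurable.mul
      (Complex.continuous_ofReal.comp (continuous_gaussianWindow.pow 2)).aestronglyMeasurable
      hu.aestronglyMeasurable.comp_snd
  refine (integrable_prod_iff' hm).2 ⟨.of_forall fun x => ?_, ?_⟩
  · exact ((integrable_gaussianWindow_sq_centre x).ofReal (𝕜 := ℂ)).mul_const (u x)
  · simp only [norm_mul, Complex.norm_real, norm_pow, integral_mul_const, sq_abs, Real.norm_eq_abs,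
      integral_gaussianWindow_sq_centre]
    exact hu.norm.const_mul _

theorem integral_gaussianWindow_sq_mul {u : ℝ → ℂ} (hu : Integrable u) :
    ∫ p : ℝ, ∫ x : ℝ, ((gaussianWindow p x ^ 2 : ℝ) : ℂ) * u x =
      (((√2)⁻¹ : ℝ) : ℂ) * ∫ x, u x := by
  rw [integral_integral_swap (integrable_gaussianWindow_sq_mul hu)]
  simp_rw [integral_mul_const, integral_complex_ofReal, integral_gaussianWindow_sq_centre]
  rw [integral_const_mul]

theorem conj_eta_mul_eq (p q x : ℝ) (c : ℂ) :
    conj (eta ⟨p, q⟩ x) * c =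
      Real.fourierChar (-(inner ℝ x ((√2 / (2 * Real.pi)) * q))) • (gaussianWindow p x * c) := by
  have h2 : ((√2 : ℝ) : ℂ) ^ 2 = 2 := by
    rw [← Complex.ofReal_pow, Real.sq_sqrt zero_le_two, Complex.ofReal_ofNat]
  rw [Circle.smul_def, Real.fourierChar_apply, smul_eq_mul, ← mul_assoc]
  congr 1
  rw [eta, gaussianWindow, map_mul, Complex.conj_ofReal, ← Complex.exp_conj, Complex.ofReal_mul (_ ^ _),
    mul_left_comm, Complex.ofReal_exp, ← Complex.exp_add]
  congr 2
  have hpi : (Real.pi : ℂ) ≠ 0 := Complex.ofReal_ne_zero.2 Real.pi_ne_zero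
  rw [Complex.mk_eq_add_mul_I]
  simp only [map_add, map_sub, map_mul, map_neg, map_div₀, map_pow, map_ofNat, Complex.conj_ofReal,
    Complex.conj_I]
  simp
  field_simp
  linear_combination ((p : ℂ) ^ 2) * h2

/-- The analysis coefficient `⟨η(·;z), g⟩` is a Fourier transform of a windowed function. -/
theorem integral_conj_eta_mul_eq_fourier (g : ℝ → ℂ) (p q : ℝ) :
    ∫ x, conj (eta ⟨p, q⟩ x) * g x =
      𝓕 (fun x => (gaussianWindow p x : ℂ) * g x) (√2 / (2 * Real.pi) * q) := by
  rw [Real.fourier_eq]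
  exact integral_congr_ae (.of_forall fun x => conj_eta_mul_eq p q x (g x))

theorem integral_conj_mul_eta (f : ℝ → ℂ) (z : ℂ) :
    ∫ x, conj (f x) * eta z x = conj (∫ x, conj (eta z x) * f x) := by
  rw [← integral_conj]
  simp [mul_comm]

section Coefficients

variable {f g : ℝ → ℂ}

theorem integrable_gaussianWindow_mul (hg : MemLp g 2) (p : ℝ) :
    Integrable fun x => (gaussianWindow p x : ℂ) * g x :=
  (memLp_gaussianWindow_two p).integrable_mul hg

theorem memLp_gaussianWindow_mul (hg : MemLp g 2) (p : ℝ) :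
    MemLp (fun x => (gaussianWindow p x : ℂ) * g x) 2 :=
  hg.mul (memLp_gaussianWindow_top p)

theorem integrable_conj_mul (hf : MemLp f 2) (hg : MemLp g 2) :
    Integrable fun x => conj (f x) * g x :=
  hf.star.integrable_mul hg

theorem integrable_coefficients_slice (hf : MemLp f 2) (hg : MemLp g 2) (p : ℝ) :
    Integrable fun q : ℝ => conj (∫ x, conj (eta ⟨p, q⟩ x) * f x) *
      ∫ x, conj (eta ⟨p, q⟩ x) * g x := by
  simp_rw [integral_conj_eta_mul_eq_fourier]
  exact (integrable_conj_mul
    (memLp_two_fourier (integrable_gaussianWindow_mul hf p) (memLp_gaussianWindow_mul hf p))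
    (memLp_two_fourier (integrable_gaussianWindow_mul hg p)
      (memLp_gaussianWindow_mul hg p))).comp_mul_left' (by positivity)

theorem integral_coefficients_slice (hf : MemLp f 2) (hg : MemLp g 2) (p : ℝ) :
    ∫ q : ℝ, conj (∫ x, conj (eta ⟨p, q⟩ x) * f x) * ∫ x, conj (eta ⟨p, q⟩ x) * g x =
      ((√2 * Real.pi : ℝ) : ℂ) *
        ∫ x, ((gaussianWindow p x ^ 2 : ℝ) : ℂ) * (conj (f x) * g x) := by
  simp_rw [integral_conj_eta_mul_eq_fourier]
  rw [Measure.integral_comp_mul_left (fun ξ =>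
      conj (𝓕 (fun x => (gaussianWindow p x : ℂ) * f x) ξ) *
        𝓕 (fun x => (gaussianWindow p x : ℂ) * g x) ξ),
    integral_conj_fourier_mul_fourier (integrable_gaussianWindow_mul hf p)
      (memLp_gaussianWindow_mul hf p) (integrable_gaussianWindow_mul hg p)
      (memLp_gaussianWindow_mul hg p), Complex.real_smul]
  congr 2
  · rw [abs_of_pos (by positivity), inv_div]
    have h2 : √2 * √2 = 2 := Real.mul_self_sqrt zero_le_two
    field_simp
    linarith
  · ext x
    simp only [map_mul, Complex.conj_ofReal, Complex.ofReal_pow]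
    ring

theorem continuous_eta_uncurry : Continuous fun w : (ℝ × ℝ) × ℝ => eta ⟨w.1.1, w.1.2⟩ w.2 := by
  have : Continuous fun w : (ℝ × ℝ) × ℝ => (⟨w.1.1, w.1.2⟩ : ℂ) :=
    Complex.equivRealProdCLM.symm.continuous.comp continuous_fst
  unfold eta
  fun_prop

theorem aestronglyMeasurable_coefficient (hg : MemLp g 2) :
    AEStronglyMeasurable fun r : ℝ × ℝ => ∫ x, conj (eta ⟨r.1, r.2⟩ x) * g x :=
  ((Complex.continuous_conj.comp continuous_eta_uncurry).aestronglyMeasurable.mul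
    hg.aestronglyMeasurable.comp_snd).integral_prod_right'

theorem memLp_coefficient (hg : MemLp g 2) :
    MemLp (fun r : ℝ × ℝ => ∫ x, conj (eta ⟨r.1, r.2⟩ x) * g x) 2 := by
  have hm := aestronglyMeasurable_coefficient hg
  rw [memLp_two_iff_integrable_sq_norm hm]
  refine (integrable_prod_iff (hm.norm.pow 2)).2 ⟨.of_forall fun p => ?_, ?_⟩
  · simpa [← Complex.normSq_eq_conj_mul_self, Complex.normSq_eq_norm_sq, ← Complex.ofReal_pow]
      using (integrable_coefficients_slice hg hg p).re
  · have hint : ∀ p, ∫ q : ℝ, ‖‖∫ x, conj (eta ⟨p, q⟩ x) * g x‖ ^ 2‖ =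
        (((√2 * Real.pi : ℝ) : ℂ) *
          ∫ x, ((gaussianWindow p x ^ 2 : ℝ) : ℂ) * (conj (g x) * g x)).re := fun p => by
      rw [← integral_coefficients_slice hg hg p]
      simp_rw [← Complex.normSq_eq_conj_mul_self, integral_complex_ofReal, Complex.ofReal_re,
        Complex.normSq_eq_norm_sq, norm_pow, norm_norm]
    refine Integrable.congr ?_ (.of_forall fun p => (hint p).symm)
    exact ((integrable_gaussianWindow_sq_mul
      (integrable_conj_mul hg hg)).integral_prod_left.const_mul _).re

theorem integrable_coefficients (hf : MemLp f 2) (hg : MemLp g 2) :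
    Integrable fun r : ℝ × ℝ => conj (∫ x, conj (eta ⟨r.1, r.2⟩ x) * f x) *
      ∫ x, conj (eta ⟨r.1, r.2⟩ x) * g x :=
  (memLp_coefficient hf).star.integrable_mul (memLp_coefficient hg)

theorem integral_coefficients (hf : MemLp f 2) (hg : MemLp g 2) :
    ∫ r : ℝ × ℝ, conj (∫ x, conj (eta ⟨r.1, r.2⟩ x) * f x) *
      ∫ x, conj (eta ⟨r.1, r.2⟩ x) * g x = Real.pi * ∫ x, conj (f x) * g x := by
  rw [Measure.volume_eq_prod, integral_prod _ (integrable_coefficients hf hg)]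
  simp_rw [integral_coefficients_slice hf hg]
  rw [integral_const_mul, integral_gaussianWindow_sq_mul (integrable_conj_mul hf hg), ← mul_assoc,
    ← Complex.ofReal_mul]
  congr 2
  field_simp

end Coefficients

theorem stmt_11 (f g : Lp ℂ 2 (volume : Measure ℝ)) :
    Integrable (fun z : ℂ =>
      (∫ x : ℝ, conj (f x) * eta z x) * (∫ x : ℝ, conj (eta z x) * g x))
      (volume : Measure ℂ) ∧
    ((1 / Real.pi : ℝ) : ℂ) *
        ∫ z : ℂ, (∫ x : ℝ, conj (f x) * eta z x) * (∫ x : ℝ, conj (eta z x) * g x) =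
      ∫ x : ℝ, conj (f x) * g x := by
  have hmp := Complex.volume_preserving_equiv_real_prod.symm
  have hemb := Complex.measurableEquivRealProd.symm.measurableEmbedding
  simp_rw [integral_conj_mul_eta]
  constructor
  · rw [← hmp.integrable_comp_emb hemb]
    exact integrable_coefficients (Lp.memLp f) (Lp.memLp g)
  · rw [← hmp.integral_comp hemb]
    have hI := integral_coefficients (Lp.memLp f) (Lp.memLp g)
    simp only [Complex.measurableEquivRealProd_symm_apply]
    rw [hI, ← mul_assoc, ← Complex.ofReal_mul, one_div_mul_cancel Real.pi_ne_zero,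
      Complex.ofReal_one, one_mul]
end

section
/- Let α, β ∈ ℂ with real parts α_r, β_r and imaginary parts α_i, β_i. Then for all f, g ∈ L²(ℝ, ℂ), the function z ↦ ⟨f, η(·; z+α)⟩·⟨η(·; z + conj(β)), g⟩ is integrable over ℂ and (1/π)·∫_ℂ ⟨f, η(·; z+α)⟩·⟨η(·; z + conj(β)), g⟩ dz = e^{−(α_r − β_r)²/2} · ∫_ℝ conj(f(x))·g(x)·e^{i·√2·(α_i + β_i)·x} dx. In particular this equals ⟨f, g⟩ for all f, g if and only if conj(β) = α, so for conj(β) ≠ α the displaced bi-coherent family does not resolve the identity. -/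
open MeasureTheory
open scoped ComplexConjugate

open scoped FourierTransform SchwartzMap

/-- On `L¹ ∩ L²` the `L²` Fourier transform is given by the Fourier integral. -/
theorem coeFn_fourier_toLp_ae_eq {u : ℝ → ℂ} (hu : Integrable u) (hu₂ : MemLp u 2) :
    (𝓕 (hu₂.toLp u) : Lp ℂ 2 (volume : Measure ℝ)) =ᵐ[volume] 𝓕 u := by
  have hcont : Continuous (𝓕 u) := VectorFourier.fourierIntegral_continuous
    Real.continuous_fourierChar (by exact continuous_inner) hu
  refine ae_eq_of_integral_contDiff_smul_eq
    ((Lp.memLp _).locallyIntegrable one_le_two) hcont.locallyIntegrable fun g hg hgc => ?_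
  let G : 𝓢(ℝ, ℂ) := (hgc.comp_left Complex.ofReal_zero).toSchwartzMap
    (Complex.ofRealCLM.contDiff.comp hg)
  have hdist := congrArg (fun T => T G)
    (Lp.fourier_toTemperedDistribution_eq (hu₂.toLp u))
  simp only [TemperedDistribution.fourier_apply, Lp.toTemperedDistribution_apply] at hdist
  have hflip : ∫ x, (𝓕 (G : ℝ → ℂ)) x • u x = ∫ x, G x • 𝓕 u x := by
    have := VectorFourier.integral_fourierIntegral_smul_eq_flip (μ := volume) (ν := volume)
      (L := innerₗ ℝ) (f := (G : ℝ → ℂ)) (g := u) Real.continuous_fourierChar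
      (by exact continuous_inner) G.integrable hu
    simpa [flip_innerₗ] using! this
  calc ∫ x, g x • (𝓕 (hu₂.toLp u) : Lp ℂ 2 (volume : Measure ℝ)) x
      = ∫ x, G x • (𝓕 (hu₂.toLp u) : Lp ℂ 2 (volume : Measure ℝ)) x := rfl
    _ = ∫ x, (𝓕 G) x • hu₂.toLp u x := hdist.symm
    _ = ∫ x, (𝓕 (G : ℝ → ℂ)) x • u x := by
      refine integral_congr_ae ?_
      filter_upwards [hu₂.coeFn_toLp] with x hx
      rw [hx, SchwartzMap.fourier_coe]
    _ = ∫ x, G x • 𝓕 u x := hflip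
    _ = ∫ x, g x • 𝓕 u x := rfl

theorem memLp_fourier {u : ℝ → ℂ} (hu : Integrable u) (hu₂ : MemLp u 2) : MemLp (𝓕 u) 2 :=
  (memLp_congr_ae (coeFn_fourier_toLp_ae_eq hu hu₂)).1 (Lp.memLp _)

/-- Parseval's identity on `L¹ ∩ L²`. -/
theorem integral_conj_fourier_mul_fourier_s12 {u v : ℝ → ℂ} (hu : Integrable u) (hu₂ : MemLp u 2)
    (hv : Integrable v) (hv₂ : MemLp v 2) :
    ∫ ξ, conj (𝓕 u ξ) * 𝓕 v ξ = ∫ x, conj (u x) * v x := by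
  have h := Lp.inner_fourier_eq (hu₂.toLp u) (hv₂.toLp v)
  rw [L2.inner_def, L2.inner_def] at h
  calc ∫ ξ, conj (𝓕 u ξ) * 𝓕 v ξ = _ := integral_congr_ae ?_
    _ = _ := h
    _ = ∫ x, conj (u x) * v x := integral_congr_ae ?_
  · filter_upwards [coeFn_fourier_toLp_ae_eq hu hu₂, coeFn_fourier_toLp_ae_eq hv hv₂] with x h₁ h₂
    rw [h₁, h₂, RCLike.inner_apply, mul_comm]
  · filter_upwards [hu₂.coeFn_toLp, hv₂.coeFn_toLp] with x h₁ h₂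
    rw [h₁, h₂, RCLike.inner_apply, mul_comm]

theorem integral_norm_sq_fourier {u : ℝ → ℂ} (hu : Integrable u) (hu₂ : MemLp u 2) :
    ∫ ξ, ‖𝓕 u ξ‖ ^ 2 = ∫ x, ‖u x‖ ^ 2 := by
  have h := integral_conj_fourier_mul_fourier_s12 hu hu₂ hu hu₂
  simp_rw [Complex.conj_mul', ← Complex.ofReal_pow] at h
  rw [integral_complex_ofReal, integral_complex_ofReal] at h
  exact_mod_cast h

theorem integral_comp_sub_mul_left (K : ℝ → ℝ) (c x : ℝ) :
    ∫ a, K (x - c * a) = |c⁻¹| * ∫ y, K y := by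
  rw [Measure.integral_comp_mul_left (fun a => K (x - a)) c, integral_sub_left_eq_self, smul_eq_mul]

theorem integrable_shear_smul {E : Type*} [NormedAddCommGroup E] [NormedSpace ℝ E]
    {K : ℝ → ℝ} (hKc : Continuous K) (hK : Integrable K) {φ : ℝ → E} (hφ : Integrable φ)
    {c : ℝ} (hc : c ≠ 0) :
    Integrable (fun p : ℝ × ℝ => K (p.2 - c * p.1) • φ p.2) (volume.prod volume) := by
  have hmeas : AEStronglyMeasurable (fun p : ℝ × ℝ => K (p.2 - c * p.1) • φ p.2)
      (volume.prod volume) :=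
    (by fun_prop : Continuous fun p : ℝ × ℝ => K (p.2 - c * p.1)).aestronglyMeasurable.smul
      hφ.aestronglyMeasurable.comp_snd
  refine (integrable_prod_iff' hmeas).2 ⟨.of_forall fun x => ?_, ?_⟩
  · exact ((hK.comp_sub_left x).comp_mul_left' hc).smul_const (φ x)
  · simp_rw [norm_smul, integral_mul_const]
    simp_rw [integral_comp_sub_mul_left (fun y => ‖K y‖)]
    exact hφ.norm.const_mul _

theorem integral_integral_shear_smul {E : Type*} [NormedAddCommGroup E] [NormedSpace ℝ E]
    [CompleteSpace E] {K : ℝ → ℝ} (hKc : Continuous K) (hK : Integrable K) {φ : ℝ → E}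
    (hφ : Integrable φ) {c : ℝ} (hc : c ≠ 0) :
    ∫ a, ∫ x, K (x - c * a) • φ x = (|c⁻¹| * ∫ y, K y) • ∫ x, φ x := by
  rw [integral_integral_swap (integrable_shear_smul hKc hK hφ hc)]
  simp_rw [integral_smul_const, integral_comp_sub_mul_left, integral_smul]

/-- The overlap `|η(y;s)| |η(y;t)|` of two coherent-state envelopes. -/
noncomputable def gaussOverlap (s t y : ℝ) : ℝ :=
  Real.pi ^ (-(1 / 2 : ℝ)) * Real.exp (-(y - √2 * s) ^ 2 / 2 - (y - √2 * t) ^ 2 / 2)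

theorem continuous_gaussOverlap (s t : ℝ) : Continuous (gaussOverlap s t) := by
  unfold gaussOverlap; fun_prop

theorem gaussOverlap_eq (s t y : ℝ) : gaussOverlap s t y =
    Real.pi ^ (-(1 / 2 : ℝ)) * Real.exp (-(s - t) ^ 2 / 2) *
      Real.exp (-1 * (y - √2 * (s + t) / 2) ^ 2) := by
  rw [gaussOverlap, mul_assoc, ← Real.exp_add]
  congr 2
  have h : √2 ^ 2 = 2 := Real.sq_sqrt zero_le_two
  linear_combination (-(s - t) ^ 2 / 4) * h

theorem gaussOverlap_add (a s t x : ℝ) :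
    gaussOverlap (a + s) (a + t) x = gaussOverlap s t (x - √2 * a) := by
  unfold gaussOverlap; ring_nf

theorem integrable_gaussOverlap (s t : ℝ) : Integrable (gaussOverlap s t) := by
  simp_rw [funext (gaussOverlap_eq s t)]
  exact ((integrable_exp_neg_mul_sq one_pos).comp_sub_right _).const_mul _

theorem integral_gaussOverlap (s t : ℝ) :
    ∫ y, gaussOverlap s t y = Real.exp (-(s - t) ^ 2 / 2) := by
  simp_rw [gaussOverlap_eq]
  rw [integral_const_mul, integral_sub_right_eq_self (fun y => Real.exp (-1 * y ^ 2)),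
    integral_gaussian, div_one, Real.sqrt_eq_rpow, mul_right_comm, ← Real.rpow_add Real.pi_pos]
  simp

theorem continuous_eta (z : ℂ) : Continuous (eta z) := by
  unfold eta; fun_prop

theorem eta_eq (z : ℂ) (x : ℝ) : eta z x =
    ((Real.pi ^ (-(1 / 4 : ℝ)) * Real.exp (-(x - √2 * z.re) ^ 2 / 2) : ℝ) : ℂ) *
      Complex.exp (Complex.I * (√2 : ℝ) * z.im * x) := by
  rw [eta, Complex.ofReal_mul, Complex.ofReal_exp, mul_assoc (Complex.ofReal _) (Complex.exp _),
    ← Complex.exp_add]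
  congr 2
  have h : ((√2 : ℝ) : ℂ) ^ 2 = 2 := by exact_mod_cast Real.sq_sqrt zero_le_two
  conv_lhs => rw [← Complex.re_add_im z]
  push_cast
  simp only [Complex.add_re, Complex.ofReal_re, Complex.re_ofReal_mul, Complex.I_re, mul_zero,
    add_zero]
  linear_combination ((z.re : ℂ) ^ 2 / 2) * h

theorem eta_mul_conj_eta (z w : ℂ) (x : ℝ) : eta z x * conj (eta w x) =
    gaussOverlap z.re w.re x *
      Complex.exp (Complex.I * (√2 : ℝ) * ((z.im : ℂ) - w.im) * x) := by
  have hpi : Real.pi ^ (-(1 / 2 : ℝ)) = Real.pi ^ (-(1 / 4 : ℝ)) * Real.pi ^ (-(1 / 4 : ℝ)) := by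
    rw [← Real.rpow_add Real.pi_pos]; norm_num
  have hexp : Complex.exp (Complex.I * (√2 : ℝ) * ((z.im : ℂ) - w.im) * x) =
      Complex.exp (Complex.I * (√2 : ℝ) * z.im * x) *
        conj (Complex.exp (Complex.I * (√2 : ℝ) * w.im * x)) := by
    rw [← Complex.exp_conj, ← Complex.exp_add]
    simp only [map_mul, Complex.conj_I, Complex.conj_ofReal]
    ring_nf
  rw [hexp, eta_eq, eta_eq, gaussOverlap, hpi, sub_eq_add_neg (_ / _), Real.exp_add, ← neg_div,
    map_mul, Complex.conj_ofReal]
  push_cast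
  ring_nf

theorem norm_eta_sq (z : ℂ) (x : ℝ) : ‖eta z x‖ ^ 2 = gaussOverlap z.re z.re x := by
  have h := eta_mul_conj_eta z z x
  rw [Complex.mul_conj', sub_self, mul_zero, zero_mul, Complex.exp_zero, mul_one] at h
  exact_mod_cast h

theorem memLp_two_eta (z : ℂ) : MemLp (eta z) 2 := by
  rw [memLp_two_iff_integrable_sq_norm (continuous_eta z).aestronglyMeasurable]
  simp_rw [norm_eta_sq]
  exact integrable_gaussOverlap _ _

theorem norm_eta_le_one (z : ℂ) (x : ℝ) : ‖eta z x‖ ≤ 1 := by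
  rw [← sq_le_one_iff₀ (norm_nonneg _), norm_eta_sq, gaussOverlap]
  refine mul_le_one₀ ?_ (Real.exp_nonneg _) ?_
  · exact Real.rpow_le_one_of_one_le_of_nonpos (by linarith [Real.pi_gt_three]) (by norm_num)
  · rw [Real.exp_le_one_iff]; nlinarith [sq_nonneg (x - √2 * z.re)]

theorem memLp_two_conj_eta_mul (z : ℂ) {f : ℝ → ℂ} (hf : MemLp f 2) :
    MemLp (fun x => conj (eta z x) * f x) 2 :=
  hf.of_le ((Complex.continuous_conj.comp (continuous_eta z)).aestronglyMeasurable.mul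
    hf.aestronglyMeasurable) <| .of_forall fun x => by
      rw [norm_mul, RCLike.norm_conj]
      exact mul_le_of_le_one_left (norm_nonneg _) (norm_eta_le_one z x)

theorem integrable_conj_eta_mul (z : ℂ) {f : ℝ → ℂ} (hf : MemLp f 2) :
    Integrable (fun x => conj (eta z x) * f x) :=
  (memLp_two_eta z).star.integrable_mul hf

/-- The displaced coherent-state transform `z ↦ ⟨η(·; z + w), f⟩`. -/
noncomputable def etaTransform (w : ℂ) (f : ℝ → ℂ) (z : ℂ) : ℂ :=
  ∫ x, conj (eta (z + w) x) * f x

theorem etaTransform_eq_fourier (w : ℂ) (f : ℝ → ℂ) (a b : ℝ) :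
    etaTransform w f ⟨a, b⟩ =
      𝓕 (fun x => conj (eta (a + w) x) * f x) ((√2 * Real.pi)⁻¹ * b) := by
  rw [Real.fourier_real_eq_integral_exp_smul, etaTransform]
  refine integral_congr_ae (.of_forall fun x => ?_)
  have hfreq : -2 * Real.pi * x * ((√2 * Real.pi)⁻¹ * b) = -(√2 * b * x) := by
    have h : √2 * √2 = 2 := Real.mul_self_sqrt zero_le_two
    field_simp
    linear_combination (b * x) * h
  have hexp : Complex.exp (Complex.I * (√2 : ℝ) * ((⟨a, b⟩ : ℂ) + w).im * x) =
      Complex.exp (Complex.I * (√2 : ℝ) * ((a : ℂ) + w).im * x) *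
        Complex.exp (Complex.I * (√2 : ℝ) * b * x) := by
    rw [← Complex.exp_add]
    simp only [Complex.add_im, Complex.ofReal_im, Complex.ofReal_add, Complex.ofReal_zero]
    ring_nf
  have hconj : conj (Complex.exp (Complex.I * (√2 : ℝ) * b * x)) =
      Complex.exp ((-(√2 * b * x) : ℝ) * Complex.I) := by
    rw [← Complex.exp_conj]
    simp only [map_mul, Complex.conj_I, Complex.conj_ofReal]
    push_cast
    ring_nf
  have hre : ((⟨a, b⟩ : ℂ) + w).re = ((a : ℂ) + w).re := by simp
  simp only [hfreq, smul_eq_mul]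
  rw [eta_eq, eta_eq, hexp, hre, map_mul, map_mul, map_mul, hconj]
  ring

theorem stronglyMeasurable_etaTransform (w : ℂ) {f : ℝ → ℂ} (hf : StronglyMeasurable f) :
    StronglyMeasurable (etaTransform w f) := by
  have heta : Continuous fun p : ℂ × ℝ => conj (eta (p.1 + w) p.2) := by
    unfold eta; fun_prop
  exact StronglyMeasurable.integral_prod_right'
    (f := fun p : ℂ × ℝ => conj (eta (p.1 + w) p.2) * f p.2)
    (heta.stronglyMeasurable.mul (hf.comp_measurable measurable_snd))

theorem integrable_complex_iff_integrable_prod {E : Type*} [NormedAddCommGroup E] {F : ℂ → E} :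
    Integrable F ↔ Integrable (fun p : ℝ × ℝ => F ⟨p.1, p.2⟩) (volume.prod volume) :=
  (Complex.volume_preserving_equiv_real_prod.symm.integrable_comp_emb
    Complex.measurableEquivRealProd.symm.measurableEmbedding).symm

theorem integral_complex_eq_integral_integral {E : Type*} [NormedAddCommGroup E]
    [NormedSpace ℝ E] [CompleteSpace E] {F : ℂ → E} (hF : Integrable F) :
    ∫ z, F z = ∫ a : ℝ, ∫ b : ℝ, F ⟨a, b⟩ := by
  rw [← integral_prod _ (integrable_complex_iff_integrable_prod.1 hF)]
  exact (Complex.volume_preserving_equiv_real_prod.symm.integral_comp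
    Complex.measurableEquivRealProd.symm.measurableEmbedding F).symm

theorem sqrt_two_mul_pi_inv_pos : 0 < (√2 * Real.pi)⁻¹ := by positivity

theorem memLp_two_etaTransform (w : ℂ) {f : ℝ → ℂ} (hfm : StronglyMeasurable f)
    (hf : MemLp f 2) : MemLp (etaTransform w f) 2 := by
  have hmeas := stronglyMeasurable_etaTransform w hfm
  rw [memLp_two_iff_integrable_sq_norm hmeas.aestronglyMeasurable,
    integrable_complex_iff_integrable_prod, integrable_prod_iff]
  · simp only [etaTransform_eq_fourier]
    refine ⟨.of_forall fun a => ?_, ?_⟩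
    · have h := (memLp_fourier (integrable_conj_eta_mul (a + w) hf)
        (memLp_two_conj_eta_mul (a + w) hf)).integrable_norm_pow two_ne_zero
      exact h.comp_mul_left' sqrt_two_mul_pi_inv_pos.ne'
    · have h (a : ℝ) : ∫ b : ℝ, ‖‖𝓕 (fun x => conj (eta (a + w) x) * f x)
          ((√2 * Real.pi)⁻¹ * b)‖ ^ 2‖ = |(√2 * Real.pi)⁻¹⁻¹| *
            ∫ x, gaussOverlap w.re w.re (x - √2 * a) • ‖f x‖ ^ 2 := by
        simp_rw [Real.norm_of_nonneg (sq_nonneg ‖_‖)]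
        rw [Measure.integral_comp_mul_left
            (fun ξ => ‖𝓕 (fun x => conj (eta (a + w) x) * f x) ξ‖ ^ 2),
          integral_norm_sq_fourier (integrable_conj_eta_mul (a + w) hf)
            (memLp_two_conj_eta_mul (a + w) hf), smul_eq_mul]
        simp_rw [norm_mul, RCLike.norm_conj, mul_pow, norm_eta_sq, Complex.add_re,
          Complex.ofReal_re, gaussOverlap_add, smul_eq_mul]
      simp_rw [h]
      exact (integrable_shear_smul (continuous_gaussOverlap _ _) (integrable_gaussOverlap _ _)
        (hf.integrable_norm_pow two_ne_zero) (by positivity)).integral_prod_left.const_mul _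
  · exact ((hmeas.norm.pow 2).comp_measurable
      Complex.measurableEquivRealProd.symm.measurable).aestronglyMeasurable

theorem integrable_conj_etaTransform_mul (w v : ℂ) {f g : ℝ → ℂ} (hfm : StronglyMeasurable f)
    (hf : MemLp f 2) (hgm : StronglyMeasurable g) (hg : MemLp g 2) :
    Integrable (fun z => conj (etaTransform w f z) * etaTransform v g z) :=
  (memLp_two_etaTransform w hfm hf).star.integrable_mul (memLp_two_etaTransform v hgm hg)

theorem integral_conj_etaTransform_mul (w v : ℂ) {f g : ℝ → ℂ} (hfm : StronglyMeasurable f)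
    (hf : MemLp f 2) (hgm : StronglyMeasurable g) (hg : MemLp g 2) :
    ∫ z, conj (etaTransform w f z) * etaTransform v g z =
      (Real.pi * Real.exp (-(w.re - v.re) ^ 2 / 2)) • ∫ x, conj (f x) * g x *
        Complex.exp (Complex.I * (√2 : ℝ) * ((w.im : ℂ) - v.im) * x) := by
  rw [integral_complex_eq_integral_integral (integrable_conj_etaTransform_mul w v hfm hf hgm hg)]
  simp only [etaTransform_eq_fourier]
  have hφ : Integrable fun x : ℝ => conj (f x) * g x *
      Complex.exp (Complex.I * (√2 : ℝ) * ((w.im : ℂ) - v.im) * x) := by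
    refine (hf.star.integrable_mul hg).mul_bdd (c := 1) (by fun_prop) (.of_forall fun x => ?_)
    rw [Complex.norm_exp]
    simp
  have h (a : ℝ) : ∫ b : ℝ, conj (𝓕 (fun x => conj (eta (a + w) x) * f x)
      ((√2 * Real.pi)⁻¹ * b)) * 𝓕 (fun x => conj (eta (a + v) x) * g x) ((√2 * Real.pi)⁻¹ * b) =
        |(√2 * Real.pi)⁻¹⁻¹| • ∫ x, gaussOverlap w.re v.re (x - √2 * a) • (conj (f x) * g x *
          Complex.exp (Complex.I * (√2 : ℝ) * ((w.im : ℂ) - v.im) * x)) := by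
    rw [Measure.integral_comp_mul_left (fun ξ => conj (𝓕 (fun x => conj (eta (a + w) x) * f x) ξ) *
        𝓕 (fun x => conj (eta (a + v) x) * g x) ξ),
      integral_conj_fourier_mul_fourier_s12 (integrable_conj_eta_mul _ hf)
        (memLp_two_conj_eta_mul _ hf) (integrable_conj_eta_mul _ hg)
        (memLp_two_conj_eta_mul _ hg)]
    congr 1
    refine integral_congr_ae (.of_forall fun x => ?_)
    have he := eta_mul_conj_eta (a + w) (a + v) x
    simp only [Complex.add_re, Complex.add_im, Complex.ofReal_re, Complex.ofReal_im, zero_add,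
      gaussOverlap_add] at he
    simp only [map_mul, Complex.conj_conj, Complex.real_smul]
    linear_combination (conj (f x) * g x) * he
  simp_rw [h]
  rw [integral_smul, integral_integral_shear_smul (continuous_gaussOverlap _ _)
    (integrable_gaussOverlap _ _) hφ (by positivity), integral_gaussOverlap, smul_smul, inv_inv,
    abs_of_pos (by positivity), abs_of_pos (by positivity)]
  congr 1
  field_simp

/-- The Gaussian state `η(·; 0)` detects both the damping factor and the modulation. -/
theorem integral_conj_eta_zero_mul_exp (k : ℝ) :
    ∫ x, conj (eta 0 x) * eta 0 x * Complex.exp (Complex.I * k * x) =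
      Real.exp (-k ^ 2 / 4) := by
  have hpi : (((Real.pi : ℝ) : ℂ) / 1) ^ (1 / 2 : ℂ) = ((Real.pi ^ (1 / 2 : ℝ) : ℝ) : ℂ) := by
    rw [Complex.ofReal_cpow Real.pi_pos.le]; norm_num
  have h (x : ℝ) : conj (eta 0 x) * eta 0 x * Complex.exp (Complex.I * k * x) =
      ((Real.pi ^ (-(1 / 2 : ℝ)) : ℝ) : ℂ) *
        (Complex.exp (Complex.I * k * x) * Complex.exp (-1 * (x : ℂ) ^ 2)) := by
    rw [mul_comm (conj _), eta_mul_conj_eta, gaussOverlap_eq]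
    simp
    ring
  simp_rw [h]
  rw [integral_const_mul, fourierIntegral_gaussian (by simp) (k : ℂ), hpi, ← mul_assoc,
    ← Complex.ofReal_mul, ← Real.rpow_add Real.pi_pos]
  simp

theorem stmt_12 (α β : ℂ) :
    (∀ f g : Lp ℂ 2 (volume : Measure ℝ),
      Integrable (fun z : ℂ =>
        (∫ x : ℝ, conj (f x) * eta (z + α) x) * (∫ x : ℝ, conj (eta (z + conj β) x) * g x))
        (volume : Measure ℂ) ∧
      ((1 / Real.pi : ℝ) : ℂ) *
          ∫ z : ℂ, (∫ x : ℝ, conj (f x) * eta (z + α) x) *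
            (∫ x : ℝ, conj (eta (z + conj β) x) * g x) =
        ((Real.exp (-(α.re - β.re) ^ 2 / 2) : ℝ) : ℂ) *
          ∫ x : ℝ, conj (f x) * g x *
            Complex.exp (Complex.I * ((Real.sqrt 2 : ℝ) : ℂ) * ((α.im : ℂ) + (β.im : ℂ)) * x)) ∧
    ((∀ f g : Lp ℂ 2 (volume : Measure ℝ),
        ((1 / Real.pi : ℝ) : ℂ) *
            ∫ z : ℂ, (∫ x : ℝ, conj (f x) * eta (z + α) x) *
              (∫ x : ℝ, conj (eta (z + conj β) x) * g x) =
          ∫ x : ℝ, conj (f x) * g x) ↔ conj β = α) := by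
  have hswap (f g : Lp ℂ 2 (volume : Measure ℝ)) (z : ℂ) :
      (∫ x : ℝ, conj (f x) * eta (z + α) x) * (∫ x : ℝ, conj (eta (z + conj β) x) * g x) =
        conj (etaTransform α f z) * etaTransform (conj β) g z := by
    rw [etaTransform, etaTransform, ← integral_conj]
    simp only [map_mul, Complex.conj_conj, mul_comm]
  have hvalue (f g : Lp ℂ 2 (volume : Measure ℝ)) :
      ((1 / Real.pi : ℝ) : ℂ) *
          ∫ z : ℂ, (∫ x : ℝ, conj (f x) * eta (z + α) x) *
            (∫ x : ℝ, conj (eta (z + conj β) x) * g x) =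
        ((Real.exp (-(α.re - β.re) ^ 2 / 2) : ℝ) : ℂ) *
          ∫ x : ℝ, conj (f x) * g x *
            Complex.exp (Complex.I * ((Real.sqrt 2 : ℝ) : ℂ) * ((α.im : ℂ) + (β.im : ℂ)) * x) := by
    simp_rw [hswap]
    rw [integral_conj_etaTransform_mul α (conj β) (Lp.stronglyMeasurable f) (Lp.memLp f)
      (Lp.stronglyMeasurable g) (Lp.memLp g), Complex.real_smul, ← mul_assoc,
      ← Complex.ofReal_mul, ← mul_assoc, one_div_mul_cancel Real.pi_ne_zero, one_mul]
    simp only [Complex.conj_re, Complex.conj_im, Complex.ofReal_neg, sub_neg_eq_add]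
  refine ⟨fun f g => ⟨?_, hvalue f g⟩, fun h => ?_, fun h f g => ?_⟩
  · simp_rw [hswap]
    exact integrable_conj_etaTransform_mul _ _ (Lp.stronglyMeasurable f) (Lp.memLp f)
      (Lp.stronglyMeasurable g) (Lp.memLp g)
  · let f := (memLp_two_eta 0).toLp (eta 0)
    have hf : f =ᵐ[volume] eta 0 := (memLp_two_eta 0).coeFn_toLp
    have hmod (k : ℝ) : ∫ x : ℝ, conj (f x) * f x * Complex.exp (Complex.I * k * x) =
        Real.exp (-k ^ 2 / 4) := by
      rw [← integral_conj_eta_zero_mul_exp]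
      refine integral_congr_ae ?_
      filter_upwards [hf] with x hx
      rw [hx]
    have hff := (hvalue f f).symm.trans (h f f)
    have hone := hmod 0
    simp only [Complex.ofReal_zero, mul_zero, zero_mul, Complex.exp_zero, mul_one] at hone
    have hk := hmod (√2 * (α.im + β.im))
    simp only [Complex.ofReal_mul, Complex.ofReal_add, ← mul_assoc] at hk
    rw [hk, hone, ← Complex.ofReal_mul, ← Real.exp_add, Complex.ofReal_inj, Real.exp_eq_exp,
      mul_pow, Real.sq_sqrt zero_le_two] at hff
    have hre : α.re - β.re = 0 := by
      nlinarith [sq_nonneg (α.re - β.re), sq_nonneg (α.im + β.im)]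
    have him : α.im + β.im = 0 := by
      nlinarith [sq_nonneg (α.re - β.re), sq_nonneg (α.im + β.im)]
    apply Complex.ext
    · rw [Complex.conj_re]; linarith
    · rw [Complex.conj_im]; linarith
  · rw [hvalue, ← h]
    simp
end

section
/- Let V be a complex inner product space (inner product conjugate-linear in the first argument), let D and D' be subspaces of V, let a, b : D → D and a', b' : D' → D' be linear maps such that: (i) a(b f) − b(a f) = f for all f ∈ D; (ii) ⟨a' g, f⟩ = ⟨g, a f⟩ and ⟨b' g, f⟩ = ⟨g, b f⟩ for all f ∈ D, g ∈ D'. Let φ_0 ∈ D with a φ_0 = 0 and Ψ_0 ∈ D' with b' Ψ_0 = 0, normalized so that ⟨Ψ_0, φ_0⟩ = 1, and set φ_n = (n!)^{-1/2}·bⁿ φ_0 and Ψ_n = (n!)^{-1/2}·(a')ⁿ Ψ_0. Then ⟨Ψ_n, φ_m⟩ = δ_{nm} for all n, m ∈ ℕ, i.e. the two families are biorthogonal. -/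
open scoped InnerProductSpace ComplexConjugate

/-- If `[a, b] = 1` and `a` annihilates `φ0`, then `a` lowers `b ^ (m + 1) φ0`. -/
theorem apply_pow_succ_of_commutator_eq_one {R M : Type*} [Ring R] [AddCommGroup M] [Module R M]
    (a b : M →ₗ[R] M) (hcomm : ∀ f, a (b f) - b (a f) = f) {φ0 : M} (hφ0 : a φ0 = 0) (m : ℕ) :
    a ((b ^ (m + 1)) φ0) = (m + 1) • (b ^ m) φ0 := by
  have hab : ∀ f, a (b f) = b (a f) + f := fun f => by
    rw [← sub_eq_iff_eq_add', hcomm]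
  induction m with
  | zero => simp [hab, hφ0]
  | succ k ih =>
    rw [pow_succ' b (k + 1), Module.End.mul_apply, hab, ih, map_nsmul, ← Module.End.mul_apply,
      ← pow_succ', succ_nsmul _ (k + 1)]

/-- Pairings of the unnormalized families `(a') ^ n Ψ0` and `b ^ m φ0`. -/
theorem inner_pow_apply_vacuum {V : Type*} [NormedAddCommGroup V] [InnerProductSpace ℂ V]
    {D D' : Submodule ℂ V} (a b : D →ₗ[ℂ] D) (a' b' : D' →ₗ[ℂ] D')
    (hcomm : ∀ f : D, a (b f) - b (a f) = f)
    (ha' : ∀ (g : D') (f : D), ⟪(a' g : V), (f : V)⟫_ℂ = ⟪(g : V), (a f : V)⟫_ℂ)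
    (hb' : ∀ (g : D') (f : D), ⟪(b' g : V), (f : V)⟫_ℂ = ⟪(g : V), (b f : V)⟫_ℂ)
    {φ0 : D} (hφ0 : a φ0 = 0) {Ψ0 : D'} (hΨ0 : b' Ψ0 = 0)
    (hnorm : ⟪(Ψ0 : V), (φ0 : V)⟫_ℂ = 1) (n m : ℕ) :
    ⟪((a' ^ n) Ψ0 : V), ((b ^ m) φ0 : V)⟫_ℂ = if n = m then (n.factorial : ℂ) else 0 := by
  induction n generalizing m with
  | zero =>
    cases m with
    | zero => simpa using hnorm
    | succ k => simp [pow_succ', ← hb', hΨ0]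
  | succ n ih =>
    rw [pow_succ', Module.End.mul_apply, ha']
    cases m with
    | zero => simp [hφ0]
    | succ k =>
      rw [apply_pow_succ_of_commutator_eq_one a b hcomm hφ0, ← Nat.cast_smul_eq_nsmul ℂ,
        Submodule.coe_smul, inner_smul_right, ih]
      by_cases h : n = k
      · simp [h, Nat.factorial_succ]
      · simp [h]

theorem stmt_18 {V : Type*} [NormedAddCommGroup V] [InnerProductSpace ℂ V]
    (D D' : Submodule ℂ V) (a b : D →ₗ[ℂ] D) (a' b' : D' →ₗ[ℂ] D')
    (hcomm : ∀ f : D, a (b f) - b (a f) = f)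
    (ha' : ∀ (g : D') (f : D), ⟪((a' g : D') : V), ((f : D) : V)⟫_ℂ = ⟪((g : D') : V), ((a f : D) : V)⟫_ℂ)
    (hb' : ∀ (g : D') (f : D), ⟪((b' g : D') : V), ((f : D) : V)⟫_ℂ = ⟪((g : D') : V), ((b f : D) : V)⟫_ℂ)
    (φ0 : D) (hφ0 : a φ0 = 0) (Ψ0 : D') (hΨ0 : b' Ψ0 = 0)
    (hnorm : ⟪((Ψ0 : D') : V), ((φ0 : D) : V)⟫_ℂ = 1) :
    ∀ n m : ℕ,
      ⟪((((1 / ((Real.sqrt n.factorial : ℝ) : ℂ)) • ((a' ^ n) Ψ0) : D') : V)),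
        ((((1 / ((Real.sqrt m.factorial : ℝ) : ℂ)) • ((b ^ m) φ0) : D) : V))⟫_ℂ =
      if n = m then 1 else 0 := by
  intro n m
  rw [Submodule.coe_smul, Submodule.coe_smul, inner_smul_left, inner_smul_right,
    inner_pow_apply_vacuum a b a' b' hcomm ha' hb' hφ0 hΨ0 hnorm]
  split_ifs with h
  · subst h
    have hsq : ((Real.sqrt n.factorial : ℝ) : ℂ) * ((Real.sqrt n.factorial : ℝ) : ℂ)
        = (n.factorial : ℂ) := by
      rw [← Complex.ofReal_mul, Real.mul_self_sqrt (Nat.cast_nonneg _), Complex.ofReal_natCast]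
    have hne : ((Real.sqrt n.factorial : ℝ) : ℂ) ≠ 0 := fun h0 =>
      Nat.cast_ne_zero.mpr n.factorial_ne_zero (by rw [← hsq, h0, zero_mul])
    rw [map_div₀, map_one, Complex.conj_ofReal, ← hsq]
    field_simp
  · simp
end
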